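/- Let f be a spectral point of graphs and α ≤ β real numbers. If the exponent α is admissible for f (i.e. f_α is monotone under cohomomorphisms of noncommutative graphs of the form ⊕_{d=1}^r Ḡ_d ⊗ Q_d), then β is also admissible for f (i.e. f_β is monotone). -/

import Mathlib

open scoped Kronecker
open Matrix

namespace NCG

/-- Existence of a cohomomorphism from `T` to `S` (written `T ≤ S`). -/
def Cohom {A B : Type} [Fintype A] [DecidableEq A] [Fintype B] [DecidableEq B]
    (T : Submodule ℂ (Matrix B B ℂ)) (S : Submodule ℂ (Matrix A A ℂ)) : Prop :=
  ∃ (k : ℕ) (E : Fin k → Matrix A B ℂ),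
    (∑ i, (E i)ᴴ * E i) = 1 ∧ ∀ i j : Fin k, ∀ M ∈ S, (E i)ᴴ * M * E j ∈ T

/-- The noncommutative graph `Ḡ` of a classical graph `G`. -/
noncomputable def graphNC {V : Type} [Fintype V] [DecidableEq V] (G : SimpleGraph V) :
    Submodule ℂ (Matrix V V ℂ) :=
  Submodule.span ℂ {M | ∃ x y : V, (G.Adj x y ∨ x = y) ∧ M = Matrix.single x y 1}

/-- The confusability graph `Q_d = ℂ·I_d` of the noiseless `d`-dimensional quantum channel. -/
noncomputable def qGraph (d : ℕ) : Submodule ℂ (Matrix (Fin d) (Fin d) ℂ) :=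
  Submodule.span ℂ {(1 : Matrix (Fin d) (Fin d) ℂ)}

/-- Tensor product of noncommutative graphs. -/
noncomputable def ncTensor {A B : Type} [Fintype A] [DecidableEq A] [Fintype B] [DecidableEq B]
    (S : Submodule ℂ (Matrix A A ℂ)) (T : Submodule ℂ (Matrix B B ℂ)) :
    Submodule ℂ (Matrix (A × B) (A × B) ℂ) :=
  Submodule.span ℂ {M | ∃ X ∈ S, ∃ Y ∈ T, M = X ⊗ₖ Y}

/-- Direct sum of a finite family of noncommutative graphs. -/
noncomputable def ncDirectSum {ι : Type} [Fintype ι] [DecidableEq ι] {V : ι → Type}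
    [∀ i, Fintype (V i)] [∀ i, DecidableEq (V i)]
    (S : ∀ i, Submodule ℂ (Matrix (V i) (V i) ℂ)) :
    Submodule ℂ (Matrix (Σ i, V i) (Σ i, V i) ℂ) where
  carrier := {M | (∀ p q : Σ i, V i, p.1 ≠ q.1 → M p q = 0) ∧
    ∀ i, (Matrix.of fun x y : V i => M ⟨i, x⟩ ⟨i, y⟩) ∈ S i}
  add_mem' := by
    rintro a b ⟨ha1, ha2⟩ ⟨hb1, hb2⟩
    refine ⟨fun p q h => ?_, fun i => ?_⟩
    · simp [Matrix.add_apply, ha1 p q h, hb1 p q h]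
    · have h := (S i).add_mem (ha2 i) (hb2 i)
      convert h using 1
      rfl
  zero_mem' := by
    refine ⟨fun p q h => rfl, fun i => ?_⟩
    have h0 : (Matrix.of fun x y : V i =>
        (0 : Matrix (Σ j, V j) (Σ j, V j) ℂ) ⟨i, x⟩ ⟨i, y⟩) = 0 := rfl
    rw [h0]
    exact (S i).zero_mem
  smul_mem' := by
    rintro c a ⟨ha1, ha2⟩
    refine ⟨fun p q h => ?_, fun i => ?_⟩
    · simp [Matrix.smul_apply, ha1 p q h]
    · have h := (S i).smul_mem c (ha2 i)
      convert h using 1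
      rfl

/-- `⊕_{d=1}^r Ḡ_d ⊗ Q_d`, where `G d` plays the role of `G_{d+1}` for `d : Fin r`. -/
noncomputable def bigSum {r : ℕ} {V : Fin r → Type} [∀ d, Fintype (V d)] [∀ d, DecidableEq (V d)]
    (G : ∀ d, SimpleGraph (V d)) :
    Submodule ℂ (Matrix (Σ d : Fin r, V d × Fin (d.1 + 1))
      (Σ d : Fin r, V d × Fin (d.1 + 1)) ℂ) :=
  ncDirectSum fun d : Fin r => ncTensor (graphNC (G d)) (qGraph (d.1 + 1))


/-- Disjoint union of simple graphs. -/
def disjUnion {V W : Type} (G : SimpleGraph V) (H : SimpleGraph W) :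
    SimpleGraph (V ⊕ W) where
  Adj a b := match a, b with
    | Sum.inl x, Sum.inl y => G.Adj x y
    | Sum.inr x, Sum.inr y => H.Adj x y
    | _, _ => False
  symm := by
    constructor
    rintro (x | x) (y | y) h
    · exact G.symm.symm _ _ h
    · exact h.elim
    · exact h.elim
    · exact H.symm.symm _ _ h
  loopless := by
    constructor
    rintro (x | x) h
    · exact G.loopless.irrefl x h
    · exact H.loopless.irrefl x h

/-- Strong product of simple graphs. -/
def strongProd {V W : Type} (G : SimpleGraph V) (H : SimpleGraph W) :
    SimpleGraph (V × W) where
  Adj p q := p ≠ q ∧ (G.Adj p.1 q.1 ∨ p.1 = q.1) ∧ (H.Adj p.2 q.2 ∨ p.2 = q.2)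
  symm := by
    constructor
    rintro p q ⟨hne, h1, h2⟩
    exact ⟨hne.symm, h1.imp (fun h => h.symm) (fun h => h.symm),
      h2.imp (fun h => h.symm) (fun h => h.symm)⟩
  loopless := ⟨fun p h => h.1 rfl⟩

/-- A spectral point of graphs: a normalized, additive, multiplicative,
isomorphism-invariant graph parameter, monotone under cohomomorphisms
(homomorphisms between the complements). -/
structure GraphSpectralPoint where
  val : ∀ (V : Type) [Fintype V] [DecidableEq V], SimpleGraph V → ℝ
  nonneg : ∀ (V : Type) [Fintype V] [DecidableEq V] (G : SimpleGraph V), 0 ≤ val V G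
  iso_inv : ∀ (V W : Type) [Fintype V] [DecidableEq V] [Fintype W] [DecidableEq W]
    (G : SimpleGraph V) (H : SimpleGraph W), Nonempty (G ≃g H) → val V G = val W H
  additive : ∀ (V W : Type) [Fintype V] [DecidableEq V] [Fintype W] [DecidableEq W]
    (G : SimpleGraph V) (H : SimpleGraph W),
    val (V ⊕ W) (disjUnion G H) = val V G + val W H
  multiplicative : ∀ (V W : Type) [Fintype V] [DecidableEq V] [Fintype W] [DecidableEq W]
    (G : SimpleGraph V) (H : SimpleGraph W),
    val (V × W) (strongProd G H) = val V G * val W H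
  normalized : val (Fin 1) ⊤ = 1
  monotone : ∀ (V W : Type) [Fintype V] [DecidableEq V] [Fintype W] [DecidableEq W]
    (G : SimpleGraph V) (H : SimpleGraph W), Nonempty (Hᶜ →g Gᶜ) → val W H ≤ val V G

/-- The extension `F_α` of a graph parameter `F` with exponent `α` is monotone under
cohomomorphisms of noncommutative graphs of the form `⊕_{d=1}^r Ḡ_d ⊗ Q_d`
(the exponent `α` is admissible for `F`). -/
def MonotoneExt (F : ∀ (V : Type) [Fintype V] [DecidableEq V], SimpleGraph V → ℝ)
    (α : ℝ) : Prop :=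
  ∀ (r s : ℕ) (V : Fin r → Type) (W : Fin s → Type)
    [∀ d, Fintype (V d)] [∀ d, DecidableEq (V d)]
    [∀ d, Fintype (W d)] [∀ d, DecidableEq (W d)]
    (G : ∀ d, SimpleGraph (V d)) (H : ∀ d, SimpleGraph (W d)),
    Cohom (bigSum H) (bigSum G) →
    ∑ d : Fin s, F (W d) (H d) * ((d.1 + 1 : ℕ) : ℝ) ^ α ≤
      ∑ d : Fin r, F (V d) (G d) * ((d.1 + 1 : ℕ) : ℝ) ^ α

/-!
Let `E` be a Kraus operator of a cohomomorphism from `⊕ H̄_e ⊗ Q_e` to `⊕ Ḡ_d ⊗ Q_d`. For a vertex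
`x` of `G_d` and a vertex `y` of `H_e`, the `d × e` block `B` of `E` at `(x, y)` satisfies
`Bᴴ B ∈ ℂ·I_e`, so `B = 0` whenever `d < e`, by comparing ranks. Hence the cohomomorphism restricts
to the summands of index at least `D`, for every `D`, and admissibility of `α` bounds each tail sum
of `∑ f(H_e) e^α` by the corresponding one of `∑ f(G_d) d^α`. Summation by parts against the
nonnegative nondecreasing weights `d^(β - α)` gives the inequality for `β`.

Monotonicity of `f_α` on families with at most one member forces `f` to be isomorphism invariant and
to vanish on empty graphs, so that `f` can be evaluated on the restricted families.
-/

section SummationByParts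

variable {ι κ R : Type*} [Ring R]

theorem sum_mul_comp_eq_sum_tail_mul_sub (s : Finset ι) (p : ι → ℕ) {n : ℕ}
    (hn : ∀ i ∈ s, p i ≤ n) (u : ι → R) (w : ℕ → R) :
    ∑ i ∈ s, u i * w (p i) = (∑ i ∈ s, u i) * w 0 +
      ∑ k ∈ Finset.range n, (∑ i ∈ s with k + 1 ≤ p i, u i) * (w (k + 1) - w k) := by
  simp_rw [Finset.sum_mul, Finset.sum_filter]
  rw [Finset.sum_comm, ← Finset.sum_add_distrib]
  refine Finset.sum_congr rfl fun i hi => ?_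
  have hrange : {k ∈ Finset.range n | k + 1 ≤ p i} = Finset.range (p i) := by
    have := hn i hi
    ext k
    simp only [Finset.mem_filter, Finset.mem_range]
    omega
  rw [← Finset.sum_filter, hrange, ← Finset.mul_sum, Finset.sum_range_sub, ← mul_add,
    add_sub_cancel]

theorem sum_mul_comp_le_of_tail_sum_le [PartialOrder R] [IsOrderedRing R]
    (s : Finset ι) (t : Finset κ) (p : ι → ℕ) (q : κ → ℕ) (u : ι → R) (v : κ → R) {w : ℕ → R}
    (hw₀ : 0 ≤ w 0) (hw : Monotone w)
    (htail : ∀ D, ∑ i ∈ s with D ≤ p i, u i ≤ ∑ j ∈ t with D ≤ q j, v j) :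
    ∑ i ∈ s, u i * w (p i) ≤ ∑ j ∈ t, v j * w (q j) := by
  have htotal : ∑ i ∈ s, u i ≤ ∑ j ∈ t, v j := by simpa using htail 0
  let n := max (s.sup p) (t.sup q)
  rw [sum_mul_comp_eq_sum_tail_mul_sub s p (n := n)
      fun i hi => (Finset.le_sup hi).trans (le_max_left _ _),
    sum_mul_comp_eq_sum_tail_mul_sub t q (n := n)
      fun j hj => (Finset.le_sup hj).trans (le_max_right _ _)]
  gcongr with k
  · exact sub_nonneg.2 (hw k.le_succ)
  · exact htail (k + 1)

end SummationByParts

open scoped ComplexOrder in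
theorem eq_zero_of_conjTranspose_mul_self_eq_smul_one {𝕜 m n : Type*} [RCLike 𝕜] [Fintype m]
    [Fintype n] [DecidableEq n] (hcard : Fintype.card m < Fintype.card n) {F : Matrix m n 𝕜}
    {c : 𝕜} (hF : Fᴴ * F = c • 1) : F = 0 := by
  obtain rfl | hc := eq_or_ne c 0
  · exact conjTranspose_mul_self_eq_zero.1 (by rw [hF, zero_smul])
  · have hfull : (Fᴴ * F).rank = Fintype.card n :=
      rank_of_isUnit _ (hF ▸ isUnit_one.smul (Units.mk0 c hc))
    have hle : (Fᴴ * F).rank ≤ Fintype.card m :=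
      (rank_mul_le_right _ _).trans F.rank_le_card_height
    omega

section InclMatrix

variable {V W V' W' : Type*} [DecidableEq V] [DecidableEq V']

/-- The matrix `|x⟩ ↦ |φ x⟩` of a map `φ : W → V` of index sets. For injective `φ` it is the
isometry embedding `ℂ^W` into `ℂ^V`. -/
def inclMatrix (φ : W → V) : Matrix V W ℂ :=
  (1 : Matrix V V ℂ).submatrix id φ

theorem inclMatrix_apply (φ : W → V) (x : V) (y : W) :
    inclMatrix φ x y = if x = φ y then 1 else 0 :=
  one_apply

theorem conjTranspose_inclMatrix (φ : W → V) :
    (inclMatrix φ)ᴴ = (1 : Matrix V V ℂ).submatrix φ id := by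
  rw [inclMatrix, conjTranspose_submatrix, conjTranspose_one]

theorem conjTranspose_inclMatrix_mul_mul [Fintype V] [Fintype V'] (φ : W → V) (ψ : W' → V')
    (N : Matrix V V' ℂ) : (inclMatrix φ)ᴴ * N * inclMatrix ψ = N.submatrix φ ψ := by
  rw [conjTranspose_inclMatrix, inclMatrix, ← submatrix_id_id N,
    ← submatrix_mul _ _ _ _ _ Function.bijective_id, Matrix.one_mul,
    ← submatrix_mul _ _ _ _ _ Function.bijective_id, Matrix.mul_one, submatrix_id_id]

theorem conjTranspose_inclMatrix_mul_self [Fintype V] [DecidableEq W] {φ : W → V}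
    (hφ : Function.Injective φ) : (inclMatrix φ)ᴴ * inclMatrix φ = 1 := by
  simpa [submatrix_one φ hφ] using conjTranspose_inclMatrix_mul_mul φ φ 1

theorem inclMatrix_mul_conjTranspose_self [Fintype W] {φ : W → V} (hφ : Function.Injective φ) :
    inclMatrix φ * (inclMatrix φ)ᴴ = diagonal ((Set.range φ).indicator 1) := by
  ext x y
  simp only [mul_apply, conjTranspose_apply, inclMatrix_apply]
  by_cases hx : x ∈ Set.range φ
  · obtain ⟨w, rfl⟩ := hx
    rw [Finset.sum_eq_single w (fun v _ hv => by simp [hφ.ne hv.symm]) (by simp)]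
    simp [diagonal_apply, eq_comm]
  · have hne : ∀ w, x ≠ φ w := fun w hw => hx ⟨w, hw.symm⟩
    simp [diagonal_apply, hx, hne]

end InclMatrix

section GraphNC

variable {V W : Type} [Fintype V] [DecidableEq V] [Fintype W] [DecidableEq W]
  {G : SimpleGraph V} {H : SimpleGraph W}

theorem mem_graphNC_iff {N : Matrix V V ℂ} :
    N ∈ graphNC G ↔ ∀ x y, ¬(G.Adj x y ∨ x = y) → N x y = 0 := by
  constructor
  · intro hN x y hxy
    induction hN using Submodule.span_induction with
    | mem M hM =>
      obtain ⟨a, b, hab, rfl⟩ := hM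
      exact single_apply_of_ne _ _ _ _ _ fun ⟨hx, hy⟩ => hxy (hx ▸ hy ▸ hab)
    | zero => rfl
    | add A B _ _ hA hB => rw [Matrix.add_apply, hA, hB, add_zero]
    | smul c A _ hA => rw [Matrix.smul_apply, hA, smul_zero]
  · intro hN
    rw [matrix_eq_sum_single N]
    refine Submodule.sum_mem _ fun x _ => Submodule.sum_mem _ fun y _ => ?_
    by_cases hxy : G.Adj x y ∨ x = y
    · rw [← mul_one (N x y), ← smul_eq_mul, ← smul_single]
      exact Submodule.smul_mem _ _ (Submodule.subset_span ⟨x, y, hxy, rfl⟩)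
    · rw [hN x y hxy, single_zero]
      exact Submodule.zero_mem _

theorem conjTranspose_inclMatrix_mul_mul_mem_graphNC (φ : H ↪g G) {N : Matrix V V ℂ}
    (hN : N ∈ graphNC G) : (inclMatrix φ)ᴴ * N * inclMatrix φ ∈ graphNC H := by
  rw [conjTranspose_inclMatrix_mul_mul]
  refine mem_graphNC_iff.2 fun x y hxy => mem_graphNC_iff.1 hN _ _ ?_
  rwa [φ.map_adj_iff, φ.injective.eq_iff]

theorem inclMatrix_mul_mul_conjTranspose_mem_graphNC (φ : H →g G) {N : Matrix W W ℂ}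
    (hN : N ∈ graphNC H) : inclMatrix φ * N * (inclMatrix φ)ᴴ ∈ graphNC G := by
  refine mem_graphNC_iff.2 fun v w hvw => ?_
  rw [mul_apply]
  refine Finset.sum_eq_zero fun y _ => ?_
  rw [mul_apply, Finset.sum_mul]
  refine Finset.sum_eq_zero fun x _ => ?_
  rw [conjTranspose_apply, inclMatrix_apply, inclMatrix_apply]
  split_ifs with hv hw
  · have hxy : ¬(H.Adj x y ∨ x = y) :=
      fun h => hvw (hv ▸ hw ▸ h.imp φ.map_adj (congrArg φ))
    rw [mem_graphNC_iff.1 hN x y hxy, mul_zero, zero_mul]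
  · rw [star_zero, mul_zero]
  · rw [zero_mul, zero_mul]
  · rw [zero_mul, zero_mul]

end GraphNC

theorem mem_ncTensor_qGraph_iff {A : Type} [Fintype A] [DecidableEq A]
    {S : Submodule ℂ (Matrix A A ℂ)} {d : ℕ} {M : Matrix (A × Fin d) (A × Fin d) ℂ} :
    M ∈ ncTensor S (qGraph d) ↔ ∃ N ∈ S, N ⊗ₖ 1 = M := by
  constructor
  · intro hM
    induction hM using Submodule.span_induction with
    | mem M hM =>
      obtain ⟨X, hX, Y, hY, rfl⟩ := hM
      obtain ⟨c, rfl⟩ := Submodule.mem_span_singleton.1 hY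
      exact ⟨c • X, S.smul_mem c hX, by rw [kronecker_smul, smul_kronecker]⟩
    | zero => exact ⟨0, S.zero_mem, zero_kronecker _⟩
    | add _ _ _ _ hA hB =>
      obtain ⟨N, hN, rfl⟩ := hA
      obtain ⟨N', hN', rfl⟩ := hB
      exact ⟨N + N', S.add_mem hN hN', add_kronecker _ _ _⟩
    | smul c _ _ hA =>
      obtain ⟨N, hN, rfl⟩ := hA
      exact ⟨c • N, S.smul_mem c hN, smul_kronecker _ _ _⟩
  · rintro ⟨N, hN, rfl⟩
    exact Submodule.subset_span ⟨N, hN, 1, Submodule.mem_span_singleton_self _, rfl⟩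

theorem mem_ncDirectSum_iff {ι : Type} [Fintype ι] [DecidableEq ι] {V : ι → Type}
    [∀ i, Fintype (V i)] [∀ i, DecidableEq (V i)] {S : ∀ i, Submodule ℂ (Matrix (V i) (V i) ℂ)}
    {M : Matrix (Σ i, V i) (Σ i, V i) ℂ} :
    M ∈ ncDirectSum S ↔ ∃ N : ∀ i, Matrix (V i) (V i) ℂ, (∀ i, N i ∈ S i) ∧
      blockDiagonal' N = M := by
  constructor
  · rintro ⟨hoff, hdiag⟩
    refine ⟨blockDiag' M, hdiag, ?_⟩
    ext ⟨i, x⟩ ⟨j, y⟩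
    obtain rfl | hij := eq_or_ne i j
    · rw [blockDiagonal'_apply_eq, blockDiag'_apply]
    · rw [blockDiagonal'_apply_ne _ _ _ hij, hoff _ _ hij]
  · rintro ⟨N, hN, rfl⟩
    refine ⟨fun p q hpq => blockDiagonal'_apply_ne _ _ _ hpq, fun i => ?_⟩
    simp only [blockDiagonal'_apply_eq]
    exact hN i

section Cohom

variable {A B : Type} [Fintype A] [DecidableEq A] [Fintype B] [DecidableEq B]
  {S : Submodule ℂ (Matrix A A ℂ)} {T : Submodule ℂ (Matrix B B ℂ)}

theorem cohom_of_isEmpty [IsEmpty B] : Cohom T S :=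
  ⟨0, finZeroElim, Subsingleton.elim _ _, finZeroElim⟩

theorem cohom_of_isometry {J : Matrix A B ℂ} (hJ : Jᴴ * J = 1)
    (hST : ∀ M ∈ S, Jᴴ * M * J ∈ T) : Cohom T S :=
  ⟨1, fun _ => J, by rw [Fin.sum_univ_one, hJ], fun _ _ => hST⟩

theorem Cohom.compress {A' B' : Type} [Fintype A'] [DecidableEq A'] [Fintype B'] [DecidableEq B']
    {S' : Submodule ℂ (Matrix A' A' ℂ)} {T' : Submodule ℂ (Matrix B' B' ℂ)} (h : Cohom T S)
    {J : Matrix A A' ℂ} {K : Matrix B B' ℂ} (hS : ∀ M ∈ S', J * M * Jᴴ ∈ S)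
    (hT : ∀ M ∈ T, Kᴴ * M * K ∈ T') (hK : Kᴴ * K = 1)
    (hrange : ∀ E : Matrix A B ℂ, (∀ M ∈ S, Eᴴ * M * E ∈ T) → J * Jᴴ * (E * K) = E * K) :
    Cohom T' S' := by
  obtain ⟨n, E, hE, hEST⟩ := h
  refine ⟨n, fun i => Jᴴ * (E i * K), ?_, fun i j M hM => ?_⟩
  · calc ∑ i, (Jᴴ * (E i * K))ᴴ * (Jᴴ * (E i * K))
        = ∑ i, Kᴴ * ((E i)ᴴ * E i) * K := Finset.sum_congr rfl fun i _ => by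
          rw [conjTranspose_mul, conjTranspose_conjTranspose, Matrix.mul_assoc,
            ← Matrix.mul_assoc J, hrange _ (hEST i i), conjTranspose_mul]
          simp only [Matrix.mul_assoc]
      _ = Kᴴ * (∑ i, (E i)ᴴ * E i) * K := by rw [Matrix.mul_sum, Matrix.sum_mul]
      _ = 1 := by rw [hE, Matrix.mul_one, hK]
  · have hconj : (Jᴴ * (E i * K))ᴴ * M * (Jᴴ * (E j * K)) =
        Kᴴ * ((E i)ᴴ * (J * M * Jᴴ) * E j) * K := by
      simp only [conjTranspose_mul, conjTranspose_conjTranspose, Matrix.mul_assoc]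
    rw [hconj]
    exact hT _ (hEST i j _ (hS M hM))

end Cohom

section BigSum

variable {r s : ℕ} {V V' : Fin r → Type} {W : Fin s → Type}

/-- The basis labels of `⊕_d ℂ^(V d) ⊗ ℂ^(d+1)`, the space on which `bigSum` acts. -/
abbrev BlockIndex (V : Fin r → Type) : Type :=
  Σ d : Fin r, V d × Fin (d.1 + 1)

/-- The basis labels of the summand `|x⟩ ⊗ ℂ^(d+1)` at the vertex `x` of the `d`-th graph. -/
abbrev fiberIndex (d : Fin r) (x : V d) (k : Fin (d.1 + 1)) : BlockIndex V :=
  ⟨d, x, k⟩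

theorem fiberIndex_injective (d : Fin r) (x : V d) : Function.Injective (fiberIndex d x) :=
  sigma_mk_injective.comp (Prod.mk_right_injective x)

theorem range_fiberIndex (d : Fin r) (x : V d) :
    Set.range (fiberIndex d x) = (fun p => ⟨p.1, p.2.1⟩) ⁻¹' {(⟨d, x⟩ : Σ d, V d)} := by
  ext ⟨e, y, l⟩
  constructor
  · rintro ⟨k, ⟨⟩⟩
    rfl
  · rintro ⟨⟩
    exact ⟨l, rfl⟩

/-- The block-diagonal matrix `⊕_d a_d ⊗ I_(d+1)`. -/
def blockAmplify (a : ∀ d, Matrix (V d) (V' d) ℂ) : Matrix (BlockIndex V) (BlockIndex V') ℂ :=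
  blockDiagonal' fun d => a d ⊗ₖ 1

theorem blockAmplify_apply_eq (a : ∀ d, Matrix (V d) (V' d) ℂ) (d : Fin r) (x : V d) (y : V' d)
    (k l : Fin (d.1 + 1)) :
    blockAmplify a ⟨d, x, k⟩ ⟨d, y, l⟩ = a d x y * (1 : Matrix _ _ ℂ) k l := by
  rw [blockAmplify, blockDiagonal'_apply_eq, kronecker_apply]

theorem conjTranspose_blockAmplify (a : ∀ d, Matrix (V d) (V' d) ℂ) :
    (blockAmplify a)ᴴ = blockAmplify fun d => (a d)ᴴ := by
  simp only [blockAmplify, blockDiagonal'_conjTranspose, conjTranspose_kronecker,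
    conjTranspose_one]

theorem blockAmplify_mul {V'' : Fin r → Type} [∀ d, Fintype (V' d)]
    (a : ∀ d, Matrix (V d) (V' d) ℂ) (b : ∀ d, Matrix (V' d) (V'' d) ℂ) :
    blockAmplify a * blockAmplify b = blockAmplify fun d => a d * b d := by
  simp only [blockAmplify, ← blockDiagonal'_mul, ← mul_kronecker_mul, Matrix.one_mul]

theorem blockAmplify_diagonal [∀ d, DecidableEq (V d)] (c : ∀ d, V d → ℂ) :
    (blockAmplify fun d => diagonal (c d)) = diagonal fun p => c p.1 p.2.1 := by
  simp only [blockAmplify, ← diagonal_one, diagonal_kronecker_diagonal, blockDiagonal'_diagonal,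
    mul_one]

theorem blockAmplify_one [∀ d, DecidableEq (V d)] :
    (blockAmplify fun d => (1 : Matrix (V d) (V d) ℂ)) = 1 := by
  simpa using blockAmplify_diagonal (V := V) 1

theorem conjTranspose_blockAmplify_inclMatrix_mul_self [∀ d, Fintype (V d)]
    [∀ d, DecidableEq (V d)] [∀ d, DecidableEq (V' d)] {φ : ∀ d, V' d → V d}
    (hφ : ∀ d, Function.Injective (φ d)) :
    (blockAmplify fun d => inclMatrix (φ d))ᴴ * (blockAmplify fun d => inclMatrix (φ d)) = 1 := by
  simp only [conjTranspose_blockAmplify, blockAmplify_mul,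
    conjTranspose_inclMatrix_mul_self (hφ _), blockAmplify_one]

theorem blockAmplify_inclMatrix_mul_conjTranspose_self [∀ d, DecidableEq (V d)]
    [∀ d, Fintype (V' d)] {φ : ∀ d, V' d → V d}
    (hφ : ∀ d, Function.Injective (φ d)) :
    (blockAmplify fun d => inclMatrix (φ d)) * (blockAmplify fun d => inclMatrix (φ d))ᴴ =
      diagonal fun p => (Set.range (φ p.1)).indicator 1 p.2.1 := by
  simp only [conjTranspose_blockAmplify, blockAmplify_mul,
    inclMatrix_mul_conjTranspose_self (hφ _), blockAmplify_diagonal]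

variable [∀ d, Fintype (V d)] [∀ d, DecidableEq (V d)] [∀ d, Fintype (V' d)]
  [∀ d, DecidableEq (V' d)] [∀ d, Fintype (W d)] [∀ d, DecidableEq (W d)]
  {G : ∀ d, SimpleGraph (V d)} {G' : ∀ d, SimpleGraph (V' d)} {H : ∀ d, SimpleGraph (W d)}

theorem mem_bigSum_iff {M : Matrix (BlockIndex V) (BlockIndex V) ℂ} :
    M ∈ bigSum G ↔ ∃ N : ∀ d, Matrix (V d) (V d) ℂ, (∀ d, N d ∈ graphNC (G d)) ∧
      blockAmplify N = M := by
  rw [bigSum, mem_ncDirectSum_iff]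
  constructor
  · rintro ⟨M, hM, rfl⟩
    choose N hN hNM using fun d => mem_ncTensor_qGraph_iff.1 (hM d)
    exact ⟨N, hN, congrArg blockDiagonal' (funext hNM)⟩
  · rintro ⟨N, hN, rfl⟩
    exact ⟨_, fun d => mem_ncTensor_qGraph_iff.2 ⟨N d, hN d, rfl⟩, rfl⟩

theorem blockAmplify_mul_mul_mem_bigSum {a : ∀ d, Matrix (V' d) (V d) ℂ}
    {b : ∀ d, Matrix (V d) (V' d) ℂ}
    (hab : ∀ d, ∀ N ∈ graphNC (G d), a d * N * b d ∈ graphNC (G' d))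
    {M : Matrix (BlockIndex V) (BlockIndex V) ℂ} (hM : M ∈ bigSum G) :
    blockAmplify a * M * blockAmplify b ∈ bigSum G' := by
  obtain ⟨N, hN, rfl⟩ := mem_bigSum_iff.1 hM
  rw [blockAmplify_mul, blockAmplify_mul]
  exact mem_bigSum_iff.2 ⟨_, fun d => hab d _ (hN d), rfl⟩

theorem conjTranspose_blockAmplify_inclMatrix_mul_mul_mem_bigSum (φ : ∀ d, G' d ↪g G d)
    {M : Matrix (BlockIndex V) (BlockIndex V) ℂ} (hM : M ∈ bigSum G) :
    (blockAmplify fun d => inclMatrix (φ d))ᴴ * M * (blockAmplify fun d => inclMatrix (φ d)) ∈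
      bigSum G' := by
  rw [conjTranspose_blockAmplify]
  exact blockAmplify_mul_mul_mem_bigSum
    (fun d _ hN => conjTranspose_inclMatrix_mul_mul_mem_graphNC (φ d) hN) hM

theorem blockAmplify_inclMatrix_mul_mul_conjTranspose_mem_bigSum (φ : ∀ d, G' d →g G d)
    {M : Matrix (BlockIndex V') (BlockIndex V') ℂ} (hM : M ∈ bigSum G') :
    (blockAmplify fun d => inclMatrix (φ d)) * M * (blockAmplify fun d => inclMatrix (φ d))ᴴ ∈
      bigSum G := by
  rw [conjTranspose_blockAmplify]
  exact blockAmplify_mul_mul_mem_bigSum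
    (fun d _ hN => inclMatrix_mul_mul_conjTranspose_mem_graphNC (φ d) hN) hM

theorem cohom_bigSum_of_embedding (φ : ∀ d, G' d ↪g G d) : Cohom (bigSum G') (bigSum G) :=
  cohom_of_isometry (conjTranspose_blockAmplify_inclMatrix_mul_self fun d => (φ d).injective)
    fun _ hM => conjTranspose_blockAmplify_inclMatrix_mul_mul_mem_bigSum φ hM

theorem exists_submatrix_eq_smul_one_of_mem_bigSum {M : Matrix (BlockIndex V) (BlockIndex V) ℂ}
    (hM : M ∈ bigSum G) (d : Fin r) (x : V d) :
    ∃ c : ℂ, M.submatrix (fiberIndex d x) (fiberIndex d x) = c • 1 := by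
  obtain ⟨N, -, rfl⟩ := mem_bigSum_iff.1 hM
  exact ⟨N d x x, ext fun k l => blockAmplify_apply_eq N d x x k l⟩

theorem diagonal_mem_bigSum (c : (Σ d, V d) → ℂ) :
    (diagonal fun p : BlockIndex V => c ⟨p.1, p.2.1⟩) ∈ bigSum G :=
  mem_bigSum_iff.2 ⟨fun d => diagonal fun x => c ⟨d, x⟩, fun _ => mem_graphNC_iff.2 fun _ _ hxy =>
    diagonal_apply_ne _ (hxy ∘ Or.inr), blockAmplify_diagonal _⟩

theorem inclMatrix_fiberIndex_mul_conjTranspose_mem_bigSum (d : Fin r) (x : V d) :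
    inclMatrix (fiberIndex d x) * (inclMatrix (fiberIndex d x))ᴴ ∈ bigSum G := by
  rw [inclMatrix_mul_conjTranspose_self (fiberIndex_injective d x), range_fiberIndex]
  exact diagonal_mem_bigSum (({⟨d, x⟩} : Set (Σ d, V d)).indicator 1)

theorem apply_eq_zero_of_block_lt {E : Matrix (BlockIndex V) (BlockIndex W) ℂ}
    (hE : ∀ M ∈ bigSum G, Eᴴ * M * E ∈ bigSum H) {p : BlockIndex V} {q : BlockIndex W}
    (hpq : p.1.1 < q.1.1) : E p q = 0 := by
  obtain ⟨d, x, k⟩ := p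
  obtain ⟨e, y, l⟩ := q
  let J := inclMatrix (fiberIndex d x)
  let K := inclMatrix (fiberIndex e y)
  obtain ⟨c, hc⟩ := exists_submatrix_eq_smul_one_of_mem_bigSum
    (hE (J * Jᴴ) (inclMatrix_fiberIndex_mul_conjTranspose_mem_bigSum d x)) e y
  have hF : (Jᴴ * E * K)ᴴ * (Jᴴ * E * K) = c • 1 := by
    rw [← hc, ← conjTranspose_inclMatrix_mul_mul]
    simp only [K, conjTranspose_mul, conjTranspose_conjTranspose, Matrix.mul_assoc]
  have hF0 : Jᴴ * E * K = 0 :=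
    eq_zero_of_conjTranspose_mul_self_eq_smul_one (by simpa using hpq) hF
  rw [conjTranspose_inclMatrix_mul_mul] at hF0
  exact congrFun₂ hF0 k l

/-- The vertices of a family of graphs that lie in the members of index at least `D`. -/
abbrev TailVertex (V : Fin r → Type) (D : ℕ) (d : Fin r) : Type :=
  {_x : V d // D ≤ d.1}

/-- The family obtained from `G` by deleting all vertices of the graphs of index below `D`. Emptying
these graphs, instead of dropping them, keeps every remaining graph at its index `d`. -/
abbrev tailGraph (G : ∀ d, SimpleGraph (V d)) (D : ℕ) (d : Fin r) :
    SimpleGraph (TailVertex V D d) :=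
  (G d).comap Subtype.val

/-- The inclusion of the tail of a family of graphs as a family of induced subgraphs. -/
def tailEmbedding (G : ∀ d, SimpleGraph (V d)) (D : ℕ) (d : Fin r) : tailGraph G D d ↪g G d :=
  SimpleGraph.Embedding.comap (Function.Embedding.subtype _) (G d)

theorem mul_blockAmplify_tailEmbedding_apply_eq_zero {E : Matrix (BlockIndex V) (BlockIndex W) ℂ}
    (hE : ∀ M ∈ bigSum G, Eᴴ * M * E ∈ bigSum H) {D : ℕ} {p : BlockIndex V} (hp : p.1.1 < D)
    (q : BlockIndex (TailVertex W D)) :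
    (E * blockAmplify fun e => inclMatrix (tailEmbedding H D e)) p q = 0 := by
  rw [mul_apply]
  refine Finset.sum_eq_zero fun b _ => ?_
  obtain hbq | hbq := eq_or_ne b.1 q.1
  · have hpb : p.1.1 < b.1.1 := hbq ▸ hp.trans_le q.2.1.2
    rw [apply_eq_zero_of_block_lt hE hpb, zero_mul]
  · rw [blockAmplify, blockDiagonal'_apply_ne _ _ _ hbq, mul_zero]

theorem Cohom.tail (h : Cohom (bigSum H) (bigSum G)) (D : ℕ) :
    Cohom (bigSum (tailGraph H D)) (bigSum (tailGraph G D)) := by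
  refine h.compress (J := blockAmplify fun d => inclMatrix (tailEmbedding G D d))
    (K := blockAmplify fun e => inclMatrix (tailEmbedding H D e))
    (fun M => blockAmplify_inclMatrix_mul_mul_conjTranspose_mem_bigSum
      fun d => (tailEmbedding G D d).toHom)
    (fun M => conjTranspose_blockAmplify_inclMatrix_mul_mul_mem_bigSum (tailEmbedding H D))
    (conjTranspose_blockAmplify_inclMatrix_mul_self fun e => (tailEmbedding H D e).injective)
    fun E hE => ?_
  rw [blockAmplify_inclMatrix_mul_conjTranspose_self fun d => (tailEmbedding G D d).injective]
  ext p q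
  rw [diagonal_mul]
  obtain hp | hp := lt_or_ge p.1.1 D
  · rw [mul_blockAmplify_tailEmbedding_apply_eq_zero hE hp, mul_zero]
  · have hrange : p.2.1 ∈ Set.range (tailEmbedding G D p.1) := ⟨⟨p.2.1, hp⟩, rfl⟩
    rw [Set.indicator_of_mem hrange, Pi.one_apply, one_mul]

end BigSum

section MonotoneExt

variable {F : ∀ (V : Type) [Fintype V] [DecidableEq V], SimpleGraph V → ℝ} {α : ℝ}

theorem MonotoneExt.eq_zero_of_isEmpty (hF : MonotoneExt F α) {V : Type} [Fintype V]
    [DecidableEq V] [IsEmpty V] (G : SimpleGraph V) : F V G = 0 := by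
  have : IsEmpty (BlockIndex fun _ : Fin 1 => V) := ⟨fun p => isEmptyElim p.2.1⟩
  have hle := hF 0 1 (fun _ => V) (fun _ => V) (fun _ => G) (fun _ => G) cohom_of_isEmpty
  have hge := hF 1 0 (fun _ => V) (fun _ => V) (fun _ => G) (fun _ => G) cohom_of_isEmpty
  exact le_antisymm (by simpa using hle) (by simpa using hge)

theorem MonotoneExt.le_of_embedding (hF : MonotoneExt F α) {V W : Type} [Fintype V]
    [DecidableEq V] [Fintype W] [DecidableEq W] {G : SimpleGraph V} {H : SimpleGraph W}
    (φ : H ↪g G) : F W H ≤ F V G := by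
  simpa using hF 1 1 (fun _ => V) (fun _ => W) (fun _ => G) (fun _ => H)
    (cohom_bigSum_of_embedding fun _ => φ)

theorem MonotoneExt.eq_of_iso (hF : MonotoneExt F α) {V W : Type} [Fintype V] [DecidableEq V]
    [Fintype W] [DecidableEq W] {G : SimpleGraph V} {H : SimpleGraph W} (e : G ≃g H) :
    F V G = F W H :=
  (hF.le_of_embedding e.toEmbedding).antisymm (hF.le_of_embedding e.symm.toEmbedding)

theorem MonotoneExt.apply_tailGraph (hF : MonotoneExt F α) {r : ℕ} {V : Fin r → Type}
    [∀ d, Fintype (V d)] [∀ d, DecidableEq (V d)] (G : ∀ d, SimpleGraph (V d)) (D : ℕ)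
    (d : Fin r) :
    F (TailVertex V D d) (tailGraph G D d) = if D ≤ d.1 then F (V d) (G d) else 0 := by
  split_ifs with hd
  · exact hF.eq_of_iso (SimpleGraph.Iso.comap (Equiv.subtypeUnivEquiv fun _ => hd) (G d))
  · have : IsEmpty (TailVertex V D d) := ⟨fun x => hd x.2⟩
    exact hF.eq_zero_of_isEmpty _

theorem MonotoneExt.tail_sum_le (hF : MonotoneExt F α) {r s : ℕ} {V : Fin r → Type}
    {W : Fin s → Type} [∀ d, Fintype (V d)] [∀ d, DecidableEq (V d)] [∀ d, Fintype (W d)]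
    [∀ d, DecidableEq (W d)] {G : ∀ d, SimpleGraph (V d)} {H : ∀ d, SimpleGraph (W d)}
    (h : Cohom (bigSum H) (bigSum G)) (D : ℕ) :
    ∑ d with D ≤ d.1, F (W d) (H d) * ((d.1 + 1 : ℕ) : ℝ) ^ α ≤
      ∑ d with D ≤ d.1, F (V d) (G d) * ((d.1 + 1 : ℕ) : ℝ) ^ α := by
  simpa only [hF.apply_tailGraph, ite_mul, zero_mul, ← Finset.sum_filter] using
    hF r s _ _ (tailGraph G D) (tailGraph H D) (h.tail D)

end MonotoneExt

theorem admissible_exponents_upwards_closed_general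
    (F : ∀ (V : Type) [Fintype V] [DecidableEq V], SimpleGraph V → ℝ) {α β : ℝ}
    (hαβ : α ≤ β) (hadm : MonotoneExt F α) : MonotoneExt F β := by
  intro r s V W _ _ _ _ G H hGH
  have hsplit (a : ℝ) (n : ℕ) : a * ((n + 1 : ℕ) : ℝ) ^ β =
      a * ((n + 1 : ℕ) : ℝ) ^ α * ((n + 1 : ℕ) : ℝ) ^ (β - α) := by
    rw [mul_assoc, ← Real.rpow_add (by positivity), add_sub_cancel]
  have hmono : Monotone fun n : ℕ => ((n + 1 : ℕ) : ℝ) ^ (β - α) := fun m n hmn =>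
    Real.rpow_le_rpow (by positivity) (by gcongr) (sub_nonneg.2 hαβ)
  simp_rw [hsplit]
  exact sum_mul_comp_le_of_tail_sum_le _ _ Fin.val Fin.val _ _ (by positivity) hmono
    (hadm.tail_sum_le hGH)

theorem admissible_exponents_upwards_closed (f : GraphSpectralPoint) {α β : ℝ}
    (hαβ : α ≤ β) (hadm : MonotoneExt f.val α) : MonotoneExt f.val β :=
  admissible_exponents_upwards_closed_general f.val hαβ hadm

end NCG
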